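/- Let (X,d) be a complete metric space admitting a conical geodesic bicombing σ. Then there exists a contracting barycenter map β_σ : P₁(X) → X such that β_σ(μ) lies in the closed σ-convex hull of the support of μ, for every μ ∈ P₁(X). -/

import Mathlib

open scoped ENNReal
open MeasureTheory

/-- A geodesic bicombing on a metric space `X`: a map `σ : X × X × [0,1] → X` such that
`σ x y 0 = x`, `σ x y 1 = y` and `dist (σ x y s) (σ x y t) = |s - t| * dist x y`
for all `s, t ∈ [0,1]`. -/
def IsGeodesicBicombing {X : Type*} [MetricSpace X] (σ : X → X → ℝ → X) : Prop :=
  (∀ x y : X, σ x y 0 = x) ∧ (∀ x y : X, σ x y 1 = y) ∧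
    ∀ x y : X, ∀ s ∈ Set.Icc (0:ℝ) 1, ∀ t ∈ Set.Icc (0:ℝ) 1,
      dist (σ x y s) (σ x y t) = |s - t| * dist x y

/-- A bicombing is conical if
`dist (σ x y t) (σ x' y' t) ≤ (1 - t) * dist x x' + t * dist y y'` for all `t ∈ [0,1]`. -/
def IsConical {X : Type*} [MetricSpace X] (σ : X → X → ℝ → X) : Prop :=
  ∀ x y x' y' : X, ∀ t ∈ Set.Icc (0:ℝ) 1,
    dist (σ x y t) (σ x' y' t) ≤ (1 - t) * dist x x' + t * dist y y'

/-- A bicombing is reversible if `σ x y t = σ y x (1 - t)` for all `t ∈ [0,1]`. -/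
def IsReversible {X : Type*} [MetricSpace X] (σ : X → X → ℝ → X) : Prop :=
  ∀ x y : X, ∀ t ∈ Set.Icc (0:ℝ) 1, σ x y t = σ y x (1 - t)

/-- The first Wasserstein distance between two (probability) measures: the infimum of
`∫ d(x,y) dγ` over all couplings `γ` of the pair, i.e. probability measures on `X × X`
with first marginal `μ` and second marginal `ν`. -/
noncomputable def W1 {X : Type*} [MetricSpace X] [MeasurableSpace X]
    (μ ν : MeasureTheory.Measure X) : ℝ≥0∞ :=
  ⨅ (γ : MeasureTheory.Measure (X × X)) (_ : MeasureTheory.IsProbabilityMeasure γ ∧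
      γ.map Prod.fst = μ ∧ γ.map Prod.snd = ν),
    ∫⁻ p, edist p.1 p.2 ∂γ

/-- Membership in `P₁(X)`: a Radon probability measure with finite first moment. -/
def MemP1 {X : Type*} [MetricSpace X] [MeasurableSpace X]
    (μ : MeasureTheory.Measure X) : Prop :=
  MeasureTheory.IsProbabilityMeasure μ ∧ μ.InnerRegular ∧
    ∀ x₀ : X, (∫⁻ x, edist x x₀ ∂μ) ≠ ⊤

/-- `P₁(X)`: the space of Radon probability measures on `X` with finite first moment. -/
abbrev P1 (X : Type*) [MetricSpace X] [MeasurableSpace X] : Type _ :=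
  {μ : MeasureTheory.Measure X // MemP1 μ}

/-- A contracting barycenter map: a `1`-Lipschitz map `β : P₁(X) → X` (with respect to the
first Wasserstein distance) such that `β δ_x = x` for every `x`. -/
def IsContractingBarycenter {X : Type*} [MetricSpace X] [MeasurableSpace X]
    (β : P1 X → X) : Prop :=
  (∀ μ ν : P1 X, edist (β μ) (β ν) ≤ W1 μ.1 ν.1) ∧
    ∀ (x : X) (μ : P1 X), μ.1 = MeasureTheory.Measure.dirac x → β μ = x

/-- A set `C` is `σ`-convex if `σ x y t ∈ C` whenever `x, y ∈ C` and `t ∈ [0,1]`. -/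
def IsSigmaConvex {X : Type*} [MetricSpace X] (σ : X → X → ℝ → X) (C : Set X) : Prop :=
  ∀ x ∈ C, ∀ y ∈ C, ∀ t ∈ Set.Icc (0:ℝ) 1, σ x y t ∈ C

/-- The `σ`-convex hull of `A`: the smallest `σ`-convex set containing `A`. -/
def sigmaConvexHull {X : Type*} [MetricSpace X] (σ : X → X → ℝ → X) (A : Set X) : Set X :=
  ⋂₀ {C : Set X | A ⊆ C ∧ IsSigmaConvex σ C}

/-- The support of a measure: the points all of whose open neighbourhoods have positive
measure. -/
def measureSupport {X : Type*} [TopologicalSpace X] [MeasurableSpace X]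
    (μ : Measure X) : Set X :=
  {x : X | ∀ U : Set X, IsOpen U → x ∈ U → 0 < μ U}

/-!
Only the midpoints `M x y = σ x y (1 / 2)` matter. They define symmetric means `b n` of `n` points
by recursion on `n`: replacing every point of a tuple by the mean of the others contracts the
diameter of the tuple, so the iterates converge to a common limit. For two points there is no strict
contraction, and the Goebel–Kirk inequality takes its place.

Each `b n` is symmetric and `1`-Lipschitz for the average distance, so it is `1`-Lipschitz for the
transport distance of empirical measures. Two independent samples of a finitely supported law have
empirical measures at expected distance `O(1 / √n)`, hence by approximation `b n` concentrates on
independent samples of any `μ` in `P₁(X)`. Leaving one point out shows that the expected distance of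
`b n` to a fixed point decreases with `n`. Thus the points of concentration form a Cauchy sequence,
and its limit is the barycenter of `μ`. Sampling from a coupling gives the contraction property.
-/

open Filter Topology
open scoped BigOperators Finset

/-! ### Conical midpoint maps -/

section Midpoint

variable {X : Type*} [PseudoMetricSpace X] {M : X → X → X}

/-- A conical midpoint map, that is, the time-`1 / 2` slice of a conical bicombing. It need not be
commutative. -/
structure IsConicalMidpoint (M : X → X → X) : Prop where
  self : ∀ x, M x x = x
  dist_le : ∀ x y x' y', dist (M x y) (M x' y') ≤ (dist x x' + dist y y') / 2

/-- Stability of a set under a midpoint map, the midpoint analogue of `σ`-convexity. -/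
def IsMidpointConvex {X : Type*} (M : X → X → X) (C : Set X) : Prop :=
  ∀ x ∈ C, ∀ y ∈ C, M x y ∈ C

namespace IsConicalMidpoint

lemma dist_left_le (hM : IsConicalMidpoint M) (x y z : X) :
    dist (M x y) z ≤ (dist x z + dist y z) / 2 := by
  simpa only [hM.self] using hM.dist_le x y z z

lemma continuous (hM : IsConicalMidpoint M) : Continuous (Function.uncurry M) := by
  refine (LipschitzWith.of_dist_le' (K := 1) fun p q => ?_).continuous
  rw [one_mul, Prod.dist_eq]
  refine (hM.dist_le _ _ _ _).trans ?_
  linarith [le_max_left (dist p.1 q.1) (dist p.2 q.2), le_max_right (dist p.1 q.1) (dist p.2 q.2)]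

section Iteration

variable {x y : ℕ → X}

lemma antitone_dist (hM : IsConicalMidpoint M) (hx : ∀ k, x (k + 1) = M (x k) (y k))
    (hy : ∀ k, y (k + 1) = M (y k) (x k)) : Antitone fun k => dist (x k) (y k) := by
  refine antitone_nat_of_succ_le fun k => ?_
  have h := hM.dist_le (x k) (y k) (y k) (x k)
  rw [← hx, ← hy, dist_comm (y k) (x k)] at h
  linarith

lemma dist_add_dist_le (hM : IsConicalMidpoint M) (hx : ∀ k, x (k + 1) = M (x k) (y k))
    (hy : ∀ k, y (k + 1) = M (y k) (x k)) (z : X) (k : ℕ) :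
    dist (x k) z + dist (y k) z ≤ dist (x 0) z + dist (y 0) z := by
  induction k with
  | zero => exact le_rfl
  | succ k ih =>
    have hxz := hM.dist_left_le (x k) (y k) z
    have hyz := hM.dist_left_le (y k) (x k) z
    rw [hx, hy]
    linarith

lemma dist_add_le (hM : IsConicalMidpoint M) (hx : ∀ k, x (k + 1) = M (x k) (y k))
    (hy : ∀ k, y (k + 1) = M (y k) (x k)) (i n : ℕ) :
    dist (y i) (y (i + n)) ≤ n / 2 * dist (x i) (y i) := by
  induction n with
  | zero => simp
  | succ n ih =>
    have hstep := hM.dist_left_le (y (i + n)) (x (i + n)) (y (i + n))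
    rw [← hy, dist_self, zero_add, dist_comm] at hstep
    have hanti := hM.antitone_dist hx hy (Nat.le_add_right i n)
    have htri := dist_triangle (y i) (y (i + n)) (y (i + n + 1))
    rw [← add_assoc]
    push_cast
    linarith

lemma goebel_kirk (hM : IsConicalMidpoint M) (hx : ∀ k, x (k + 1) = M (x k) (y k))
    (hy : ∀ k, y (k + 1) = M (y k) (x k)) (n i : ℕ) :
    (1 + n / 2) * dist (x i) (y i) ≤
      dist (x i) (y (i + n)) + 2 ^ n * (dist (x i) (y i) - dist (x (i + n)) (y (i + n))) := by
  induction n generalizing i with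
  | zero => simp
  | succ n ih =>
    have hih := ih (i + 1)
    rw [add_right_comm, add_assoc] at hih
    have hmid := hM.dist_left_le (x i) (y i) (y (i + (n + 1)))
    rw [← hx] at hmid
    have hpath := hM.dist_add_le hx hy i (n + 1)
    have hanti : dist (x (i + 1)) (y (i + 1)) ≤ dist (x i) (y i) :=
      hM.antitone_dist hx hy i.le_succ
    have hpow : (n : ℝ) + 2 ≤ 2 * 2 ^ n := by
      have := one_add_mul_le_pow (show (-2 : ℝ) ≤ 1 by norm_num) n
      norm_num at this
      linarith [Nat.one_le_two_pow (n := n)]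
    push_cast at hpath ⊢
    rw [pow_succ']
    linarith [mul_nonneg (sub_nonneg.2 hpow) (sub_nonneg.2 hanti)]

lemma tendsto_dist_zero (hM : IsConicalMidpoint M) (hx : ∀ k, x (k + 1) = M (x k) (y k))
    (hy : ∀ k, y (k + 1) = M (y k) (x k)) :
    Tendsto (fun k => dist (x k) (y k)) atTop (𝓝 0) := by
  obtain ⟨r, hr⟩ : ∃ r, Tendsto (fun k => dist (x k) (y k)) atTop (𝓝 r) :=
    ⟨_, tendsto_atTop_ciInf (hM.antitone_dist hx hy)
      ⟨0, Set.forall_mem_range.2 fun _ => dist_nonneg⟩⟩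
  have hr0 : 0 ≤ r := ge_of_tendsto' hr fun _ => dist_nonneg
  have hbdd (i j : ℕ) : dist (x i) (y j) ≤ 2 * dist (x 0) (y 0) := by
    have hi := hM.dist_add_dist_le hx hy (x 0) i
    have hj := hM.dist_add_dist_le hx hy (x 0) j
    rw [dist_self, zero_add, dist_comm (y 0)] at hi hj
    linarith [dist_triangle_right (x i) (y j) (x 0), dist_nonneg (x := y i) (y := x 0),
      dist_nonneg (x := x j) (y := x 0)]
  have hbound (n : ℕ) : (1 + n / 2) * r ≤ 2 * dist (x 0) (y 0) := by
    have hlim : Tendsto (fun i => 2 * dist (x 0) (y 0) +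
        2 ^ n * (dist (x i) (y i) - dist (x (i + n)) (y (i + n)))) atTop
        (𝓝 (2 * dist (x 0) (y 0) + 2 ^ n * (r - r))) :=
      ((hr.sub ((tendsto_add_atTop_iff_nat n).2 hr)).const_mul _).const_add _
    rw [sub_self, mul_zero, add_zero] at hlim
    exact le_of_tendsto_of_tendsto' (hr.const_mul _) hlim fun i =>
      (hM.goebel_kirk hx hy n i).trans (by gcongr; exact hbdd _ _)
  suffices r = 0 by rwa [this] at hr
  by_contra hne
  obtain ⟨n, hn⟩ := exists_nat_gt (2 * (2 * dist (x 0) (y 0)) / r)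
  rw [div_lt_iff₀ (hr0.lt_of_ne' hne)] at hn
  linarith [hbound n]

end Iteration

end IsConicalMidpoint

end Midpoint

/-! ### Symmetric means -/

section Mean

variable {X ι : Type*} [MetricSpace X] [Fintype ι] {M : X → X → X}

/-- An averaging operator on `ι`-tuples: it does not increase the mean distance, it is equivariant
under permutations of the indices, and it preserves the closed midpoint convex sets. -/
structure IsAveraging (M : X → X → X) (T : (ι → X) → ι → X) : Prop where
  expect_dist_le : ∀ x y, 𝔼 i, dist (T x i) (T y i) ≤ 𝔼 i, dist (x i) (y i)
  comp_perm : ∀ (e : Equiv.Perm ι) x, T (x ∘ e) = T x ∘ e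
  mem : ∀ C, IsClosed C → IsMidpointConvex M C → ∀ x, (∀ i, x i ∈ C) → ∀ i, T x i ∈ C

/-- A symmetric mean of `ι`-tuples which is `1`-Lipschitz for the mean distance and takes values in
each closed midpoint convex set containing the points. -/
structure IsSymmetricMean (M : X → X → X) (b : (ι → X) → X) : Prop where
  dist_le : ∀ x y, dist (b x) (b y) ≤ 𝔼 i, dist (x i) (y i)
  comp_perm : ∀ (e : Equiv.Perm ι) x, b (x ∘ e) = b x
  mem : ∀ C, IsClosed C → IsMidpointConvex M C → ∀ x, (∀ i, x i ∈ C) → b x ∈ C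

lemma IsConicalMidpoint.isMidpointConvex_singleton (hM : IsConicalMidpoint M) (z : X) :
    IsMidpointConvex M {z} := by
  rintro _ rfl _ rfl
  exact hM.self _

lemma IsSymmetricMean.apply_const {b : (ι → X) → X} (hb : IsSymmetricMean M b)
    (hM : IsConicalMidpoint M) (z : X) : b (fun _ => z) = z :=
  hb.mem {z} isClosed_singleton (hM.isMidpointConvex_singleton z) _ fun _ => rfl

lemma IsSymmetricMean.dist_const_le {b : (ι → X) → X} (hb : IsSymmetricMean M b)
    (hM : IsConicalMidpoint M) (x : ι → X) (z : X) : dist (b x) z ≤ 𝔼 i, dist (x i) z := by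
  simpa only [hb.apply_const hM] using hb.dist_le x fun _ => z

namespace IsAveraging

variable {T : (ι → X) → ι → X}

lemma iterate (hT : IsAveraging M T) (k : ℕ) : IsAveraging M T^[k] := by
  induction k with
  | zero => exact ⟨fun _ _ => le_rfl, fun _ _ => rfl, fun _ _ _ _ hx => hx⟩
  | succ k ih =>
    rw [Function.iterate_succ']
    exact ⟨fun x y => (hT.expect_dist_le _ _).trans (ih.expect_dist_le x y),
      fun e x => (congrArg T (ih.comp_perm e x)).trans (hT.comp_perm e _),
      fun C hC hMC x hx => hT.mem C hC hMC _ (ih.mem C hC hMC x hx)⟩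

lemma apply_const (hT : IsAveraging M T) (hM : IsConicalMidpoint M) (z : X) :
    T (fun _ => z) = fun _ => z :=
  funext <| hT.mem {z} isClosed_singleton (hM.isMidpointConvex_singleton z) _ fun _ => rfl

lemma sum_dist_const_le (hT : IsAveraging M T) (hM : IsConicalMidpoint M) (x : ι → X) (z : X) :
    ∑ i, dist (T x i) z ≤ ∑ i, dist (x i) z := by
  have h := hT.expect_dist_le x fun _ => z
  rw [hT.apply_const hM] at h
  simpa only [Fintype.card_smul_expect] using nsmul_le_nsmul_right h (Fintype.card ι)

lemma exists_tendsto_iterate [CompleteSpace X] (hT : IsAveraging M T) (hM : IsConicalMidpoint M)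
    {x : ι → X} (hd : ∀ i j, Tendsto (fun k => dist (T^[k] x i) (T^[k] x j)) atTop (𝓝 0))
    (i : ι) : ∃ l, ∀ j, Tendsto (fun k => T^[k] x j) atTop (𝓝 l) := by
  have hdiam : Tendsto (fun k => ∑ j, dist (T^[k] x j) (T^[k] x i)) atTop (𝓝 0) := by
    simpa using tendsto_finsetSum Finset.univ fun j _ => hd j i
  obtain ⟨l, hl⟩ : ∃ l, Tendsto (fun k => T^[k] x i) atTop (𝓝 l) := by
    refine cauchySeq_tendsto_of_complete (cauchySeq_of_le_tendsto_0' _ (fun n m hnm => ?_) hdiam)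
    obtain ⟨k, rfl⟩ := Nat.exists_eq_add_of_le' hnm
    rw [Function.iterate_add_apply, dist_comm]
    calc dist (T^[k] (T^[n] x) i) (T^[n] x i)
        ≤ ∑ j, dist (T^[k] (T^[n] x) j) (T^[n] x i) :=
          Finset.single_le_sum (f := fun j => dist (T^[k] (T^[n] x) j) (T^[n] x i))
            (fun _ _ => dist_nonneg) (Finset.mem_univ i)
      _ ≤ ∑ j, dist (T^[n] x j) (T^[n] x i) := (hT.iterate k).sum_dist_const_le hM _ _
  exact ⟨l, fun j => hl.congr_dist (hd i j)⟩

lemma exists_isSymmetricMean [CompleteSpace X] [Nonempty ι] (hT : IsAveraging M T)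
    (hM : IsConicalMidpoint M)
    (hd : ∀ x i j, Tendsto (fun k => dist (T^[k] x i) (T^[k] x j)) atTop (𝓝 0)) :
    ∃ b, IsSymmetricMean M b ∧ ∀ x, b (T x) = b x := by
  obtain ⟨i₀⟩ := ‹Nonempty ι›
  choose b hb using fun x => hT.exists_tendsto_iterate hM (hd x) i₀
  refine ⟨b, ⟨fun x y => ?_, fun e x => ?_, fun C hC hMC x hx => ?_⟩, fun x => ?_⟩
  · have hlim : Tendsto (fun k => 𝔼 i, dist (T^[k] x i) (T^[k] y i)) atTop
        (𝓝 (𝔼 _i : ι, dist (b x) (b y))) := by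
      simp only [Fintype.expect_eq_sum_div_card]
      exact (tendsto_finsetSum _ fun i _ => (hb x i).dist (hb y i)).div_const _
    rw [Fintype.expect_const] at hlim
    exact le_of_tendsto' hlim fun k => (hT.iterate k).expect_dist_le x y
  · refine tendsto_nhds_unique (hb (x ∘ e) i₀) ?_
    simpa only [(hT.iterate _).comp_perm, Function.comp_apply] using hb x (e i₀)
  · exact hC.mem_of_tendsto (hb x i₀) (.of_forall fun k => (hT.iterate k).mem C hC hMC x hx i₀)
  · refine tendsto_nhds_unique (hb (T x) i₀) ?_
    simpa only [← Function.iterate_succ_apply] using (tendsto_add_atTop_iff_nat 1).2 (hb x i₀)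

end IsAveraging

lemma IsConicalMidpoint.isAveraging_pair (hM : IsConicalMidpoint M) :
    IsAveraging M fun (x : Fin 2 → X) i => M (x i) (x i.rev) where
  expect_dist_le x y := by
    have h₀ := hM.dist_le (x 0) (x 1) (y 0) (y 1)
    have h₁ := hM.dist_le (x 1) (x 0) (y 1) (y 0)
    simp only [Fintype.expect_eq_sum_div_card, Fin.sum_univ_two, Fin.rev_zero, Fin.reduceLast,
      Fin.reduceRev]
    refine div_le_div_of_nonneg_right ?_ (Nat.cast_nonneg _)
    linarith
  comp_perm e x := by
    have he : ∀ (e : Equiv.Perm (Fin 2)) i, e i.rev = (e i).rev := by decide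
    simp only [Function.comp_def, he]
  mem _ _ hMC _ hx i := hMC _ (hx i) _ (hx i.rev)

lemma IsConicalMidpoint.exists_isSymmetricMean_pair [CompleteSpace X] (hM : IsConicalMidpoint M) :
    ∃ b : (Fin 2 → X) → X, IsSymmetricMean M b := by
  let T (x : Fin 2 → X) (i : Fin 2) : X := M (x i) (x i.rev)
  have hrev (x : Fin 2 → X) (i : Fin 2) :
      Tendsto (fun k => dist (T^[k] x i) (T^[k] x i.rev)) atTop (𝓝 0) := by
    refine hM.tendsto_dist_zero (fun k => ?_) fun k => ?_
    · rw [Function.iterate_succ_apply']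
    · rw [Function.iterate_succ_apply']
      simp only [T, Fin.rev_rev]
  obtain ⟨b, hb, -⟩ := hM.isAveraging_pair.exists_isSymmetricMean hM fun x i j => by
    obtain rfl | rfl : j = i ∨ j = i.rev := by
      revert i j
      decide
    · simp
    · exact hrev x i
  exact ⟨b, hb⟩

/-- The tuple of the means of `x` with one point left out. -/
def leaveOneOut {X : Type*} {n : ℕ} (b : (Fin n → X) → X) (x : Fin (n + 1) → X)
    (i : Fin (n + 1)) : X :=
  b (x ∘ i.succAbove)

lemma exists_perm_comp_succAbove {n : ℕ} (e : Equiv.Perm (Fin (n + 1))) (i : Fin (n + 1)) :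
    ∃ e' : Equiv.Perm (Fin n), e ∘ i.succAbove = (e i).succAbove ∘ e' := by
  choose f hf using fun k => Fin.exists_succAbove_eq (e.injective.ne (Fin.succAbove_ne i k))
  have hinj : Function.Injective f := fun k l hkl =>
    Fin.succAbove_right_injective (e.injective ((hf k).symm.trans ((congrArg _ hkl).trans (hf l))))
  exact ⟨.ofBijective f hinj.bijective_of_finite, funext fun k => (hf k).symm⟩

lemma expect_expect_succAbove {n : ℕ} (f : Fin (n + 2) → ℝ) :
    𝔼 i : Fin (n + 2), 𝔼 k, f (i.succAbove k) = 𝔼 i, f i := by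
  have hsum (i : Fin (n + 2)) : ∑ k, f (i.succAbove k) = ∑ j, f j - f i := by
    rw [Fin.sum_univ_succAbove f i, add_sub_cancel_left]
  simp only [Fintype.expect_eq_sum_div_card, hsum, ← Finset.sum_div, Finset.sum_sub_distrib,
    Finset.sum_const, Finset.card_univ, Fintype.card_fin, nsmul_eq_mul]
  push_cast
  field_simp
  ring

namespace IsSymmetricMean

variable {n : ℕ}

lemma isAveraging_leaveOneOut {b : (Fin (n + 1) → X) → X} (hb : IsSymmetricMean M b) :
    IsAveraging M (leaveOneOut b) where
  expect_dist_le x y := calc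
    𝔼 i, dist (leaveOneOut b x i) (leaveOneOut b y i)
        ≤ 𝔼 i : Fin (n + 2), 𝔼 k, dist (x (i.succAbove k)) (y (i.succAbove k)) :=
      Finset.expect_le_expect fun i _ => hb.dist_le (x ∘ i.succAbove) (y ∘ i.succAbove)
    _ = 𝔼 i, dist (x i) (y i) := expect_expect_succAbove fun i => dist (x i) (y i)
  comp_perm e x := by
    ext i
    obtain ⟨e', he'⟩ := exists_perm_comp_succAbove e i
    simp only [leaveOneOut, Function.comp_apply]
    rw [Function.comp_assoc, he', ← Function.comp_assoc, hb.comp_perm]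
  mem C hC hMC _ hx _ := hb.mem C hC hMC _ fun _ => hx _

-- Up to a permutation, leaving out `x i` or `x j` gives tuples that differ at a single index.
lemma dist_leaveOneOut_le {b : (Fin n → X) → X} (hb : IsSymmetricMean M b) (x : Fin (n + 1) → X)
    (i j : Fin (n + 1)) :
    dist (leaveOneOut b x i) (leaveOneOut b x j) ≤ (n : ℝ)⁻¹ * dist (x i) (x j) := by
  obtain rfl | hij := eq_or_ne i j
  · simp
  obtain ⟨e, he⟩ := exists_perm_comp_succAbove (Equiv.swap i j) i
  rw [Equiv.swap_apply_left] at he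
  obtain ⟨k, hk⟩ := Fin.exists_succAbove_eq hij.symm
  have hsum : ∑ l, dist (x (i.succAbove l)) (x (Equiv.swap i j (i.succAbove l))) =
      dist (x i) (x j) := by
    rw [Finset.sum_eq_single_of_mem k (Finset.mem_univ k), hk, Equiv.swap_apply_right, dist_comm]
    intro l _ hl
    rw [Equiv.swap_apply_of_ne_of_ne (Fin.succAbove_ne i l)
      (hk ▸ Fin.succAbove_right_injective.ne hl), dist_self]
  calc dist (leaveOneOut b x i) (leaveOneOut b x j)
      = dist (b (x ∘ i.succAbove)) (b (x ∘ Equiv.swap i j ∘ i.succAbove)) := by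
        rw [he, ← Function.comp_assoc, hb.comp_perm]
        rfl
    _ ≤ 𝔼 l, dist (x (i.succAbove l)) (x (Equiv.swap i j (i.succAbove l))) := hb.dist_le _ _
    _ = (n : ℝ)⁻¹ * dist (x i) (x j) := by
        rw [Fintype.expect_eq_sum_div_card, hsum, Fintype.card_fin, div_eq_inv_mul]

lemma tendsto_dist_iterate_leaveOneOut {b : (Fin (n + 2) → X) → X} (hb : IsSymmetricMean M b)
    (x : Fin (n + 3) → X) (i j : Fin (n + 3)) :
    Tendsto (fun k => dist ((leaveOneOut b)^[k] x i) ((leaveOneOut b)^[k] x j)) atTop (𝓝 0) := by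
  have hle (k : ℕ) : dist ((leaveOneOut b)^[k] x i) ((leaveOneOut b)^[k] x j) ≤
      (((n + 2 : ℕ) : ℝ)⁻¹) ^ k * dist (x i) (x j) := by
    induction k with
    | zero => simp
    | succ k ih =>
      rw [Function.iterate_succ_apply', pow_succ', mul_assoc]
      exact (hb.dist_leaveOneOut_le _ i j).trans (by gcongr)
  refine squeeze_zero (fun _ => dist_nonneg) hle ?_
  have hlt : (((n + 2 : ℕ) : ℝ)⁻¹) < 1 := inv_lt_one_of_one_lt₀ (by norm_cast; lia)
  simpa using (tendsto_pow_atTop_nhds_zero_of_lt_one (by positivity) hlt).mul_const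
    (dist (x i) (x j))

lemma exists_succ [CompleteSpace X] {b : (Fin (n + 2) → X) → X} (hb : IsSymmetricMean M b)
    (hM : IsConicalMidpoint M) :
    ∃ b' : (Fin (n + 3) → X) → X, IsSymmetricMean M b' ∧
      ∀ x z, dist (b' x) z ≤ 𝔼 i, dist (leaveOneOut b x i) z := by
  obtain ⟨b', hb', hfix⟩ := hb.isAveraging_leaveOneOut.exists_isSymmetricMean hM
    hb.tendsto_dist_iterate_leaveOneOut
  exact ⟨b', hb', fun x z => hfix x ▸ hb'.dist_const_le hM (leaveOneOut b x) z⟩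

end IsSymmetricMean

/-- A coherent sequence of symmetric means: the distance of `b (n + 1)` to a point is at most the
average distance of the means `b n` with one point left out. As there is nothing to choose for one
point, `b n` is a mean of `n + 2` points. -/
structure IsSymmetricMeanSeq (M : X → X → X) (b : ∀ n, (Fin (n + 2) → X) → X) : Prop where
  isSymmetricMean : ∀ n, IsSymmetricMean M (b n)
  dist_succ_le : ∀ n x z, dist (b (n + 1) x) z ≤ 𝔼 i, dist (leaveOneOut (b n) x i) z

lemma IsConicalMidpoint.exists_isSymmetricMeanSeq [CompleteSpace X] (hM : IsConicalMidpoint M) :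
    ∃ b, IsSymmetricMeanSeq M b := by
  obtain ⟨b₀, hb₀⟩ := hM.exists_isSymmetricMean_pair
  choose F hF using fun n (b : {b : (Fin (n + 2) → X) → X // IsSymmetricMean M b}) =>
    b.2.exists_succ hM
  let B (n : ℕ) : {b : (Fin (n + 2) → X) → X // IsSymmetricMean M b} :=
    Nat.rec ⟨b₀, hb₀⟩ (fun n b => ⟨F n b, (hF n b).1⟩) n
  exact ⟨fun n => (B n).1, fun n => (B n).2, fun n => (hF n (B n)).2⟩

end Mean

/-! ### Measurability and integrals of distances -/

section Integral

variable {Ω Ω' ι X : Type*} [MeasurableSpace Ω] [MeasurableSpace Ω'] {P : Measure Ω}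

lemma stronglyMeasurable_pi [Finite ι] [TopologicalSpace X] {f : ι → Ω → X}
    (hf : ∀ i, StronglyMeasurable (f i)) : StronglyMeasurable fun ω i => f i ω := by
  choose g hg using hf
  refine ⟨fun n => ⟨fun ω i => g i n ω, fun y => ?_, ?_⟩,
    fun ω => tendsto_pi_nhds.2 fun i => hg i ω⟩
  · have hfiber : (fun ω i => g i n ω) ⁻¹' {y} = ⋂ i, g i n ⁻¹' {y i} := by
      ext ω
      simp [funext_iff]
    rw [hfiber]
    exact .iInter fun i => (g i n).measurableSet_fiber _
  · refine (Set.Finite.pi' fun i => (g i n).finite_range).subset ?_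
    rintro _ ⟨ω, rfl⟩ i
    exact ⟨ω, rfl⟩

lemma aestronglyMeasurable_pi [Finite ι] [TopologicalSpace X] {f : ι → Ω → X}
    (hf : ∀ i, AEStronglyMeasurable (f i) P) : AEStronglyMeasurable (fun ω i => f i ω) P := by
  refine ⟨fun ω i => (hf i).mk _ ω, stronglyMeasurable_pi fun i => (hf i).stronglyMeasurable_mk, ?_⟩
  filter_upwards [eventually_all.2 fun i => (hf i).ae_eq_mk] with ω hω
  exact funext hω

lemma aestronglyMeasurable_id_of_innerRegular [TopologicalSpace X]
    [TopologicalSpace.MetrizableSpace X] [MeasurableSpace X] [BorelSpace X] (μ : Measure X)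
    [IsFiniteMeasure μ] [μ.InnerRegular] :
    AEStronglyMeasurable id μ := by
  refine aestronglyMeasurable_iff_aemeasurable_separable.2 ⟨aemeasurable_id, ?_⟩
  have htight (n : ℕ) : ∃ K : Set X, IsCompact K ∧ μ Kᶜ ≤ (n : ℝ≥0∞)⁻¹ := by
    simpa using isTightMeasureSet_iff_exists_isCompact_measure_compl_le.1
      (isTightMeasureSet_singleton_of_innerRegular (μ := μ)) (n : ℝ≥0∞)⁻¹ (by simp)
  choose K hK hμK using htight
  refine ⟨⋃ n, K n, .iUnion fun n => (hK n).isSeparable, ?_⟩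
  refine le_antisymm (ge_of_tendsto' ENNReal.tendsto_inv_nat_nhds_zero fun n => ?_) bot_le
  exact (measure_mono (Set.compl_subset_compl.2 (Set.subset_iUnion K n))).trans (hμK n)

lemma lintegral_comp_of_measurePreserving {Q : Measure Ω'} {φ : Ω → Ω'}
    (hφ : MeasurePreserving φ P Q) {f : Ω' → ℝ≥0∞} (hf : AEMeasurable f Q) :
    ∫⁻ ω, f (φ ω) ∂P = ∫⁻ ω, f ω ∂Q := by
  rw [← hφ.map_eq] at hf ⊢
  exact (lintegral_map' hf hφ.aemeasurable).symm

lemma lintegral_edist_le_add [PseudoEMetricSpace X] {f g : Ω → X} (h : Ω → X)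
    (hfg : AEMeasurable (fun ω => edist (f ω) (g ω)) P) :
    ∫⁻ ω, edist (f ω) (h ω) ∂P ≤ ∫⁻ ω, edist (f ω) (g ω) ∂P + ∫⁻ ω, edist (g ω) (h ω) ∂P :=
  (lintegral_mono fun ω => edist_triangle (f ω) (g ω) (h ω)).trans_eq (lintegral_add_left' hfg _)

lemma edist_le_lintegral_add [PseudoMetricSpace X] [IsProbabilityMeasure P] {f : Ω → X}
    (hf : AEStronglyMeasurable f P) (x y : X) :
    edist x y ≤ ∫⁻ ω, edist (f ω) x ∂P + ∫⁻ ω, edist (f ω) y ∂P := by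
  simpa only [lintegral_const, measure_univ, mul_one, edist_comm x] using
    lintegral_edist_le_add (fun _ => y) ((aestronglyMeasurable_const (b := x)).edist hf)

lemma exists_lintegral_edist_le_prod [PseudoMetricSpace X] [IsProbabilityMeasure P] {f : Ω → X}
    (hf : AEStronglyMeasurable f P) :
    ∃ z, ∫⁻ ω, edist (f ω) z ∂P ≤ ∫⁻ p, edist (f p.1) (f p.2) ∂P.prod P := by
  have hm : AEMeasurable (fun p : Ω × Ω => edist (f p.1) (f p.2)) (P.prod P) :=
    (hf.comp_measurePreserving measurePreserving_fst).edist
      (hf.comp_measurePreserving measurePreserving_snd)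
  obtain ⟨ω, hω⟩ := exists_le_lintegral hm.prod_swap.lintegral_prod_right'
  exact ⟨f ω, hω.trans_eq (lintegral_prod_symm _ hm).symm⟩

lemma exists_simpleFunc_lintegral_edist_lt [PseudoMetricSpace X] {f : Ω → X}
    (hf : AEStronglyMeasurable f P) {x₀ : X} (hx₀ : ∫⁻ ω, edist (f ω) x₀ ∂P ≠ ∞) {ε : ℝ≥0∞}
    (hε : 0 < ε) : ∃ g : SimpleFunc Ω X, ∫⁻ ω, edist (f ω) (g ω) ∂P < ε := by
  borelize X
  obtain ⟨f', hf', hff'⟩ := hf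
  have := hf'.separableSpace_range_union_singleton (b := x₀)
  let g := SimpleFunc.approxOn f' hf'.measurable (Set.range f' ∪ {x₀}) x₀ (.inr rfl)
  have hlim : Tendsto (fun n => ∫⁻ ω, edist (f ω) (g n ω) ∂P) atTop (𝓝 (∫⁻ _ω, 0 ∂P)) := by
    refine tendsto_lintegral_of_dominated_convergence' (fun ω => edist (f ω) x₀)
      (fun n => AEStronglyMeasurable.edist ⟨f', hf', hff'⟩ (g n).aestronglyMeasurable)
      (fun n => ?_) hx₀ ?_
    · filter_upwards [hff'] with ω hω
      rw [hω, edist_comm, edist_comm _ x₀]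
      exact SimpleFunc.edist_approxOn_le hf'.measurable _ ω n
    · filter_upwards [hff'] with ω hω
      have hg : Tendsto (fun n => g n ω) atTop (𝓝 (f' ω)) :=
        SimpleFunc.tendsto_approxOn hf'.measurable _
          (subset_closure (Set.mem_union_left {x₀} (Set.mem_range_self ω)))
      rw [hω, ← edist_self (f' ω)]
      exact tendsto_const_nhds.edist hg
  rw [lintegral_zero] at hlim
  obtain ⟨n, hn⟩ := (hlim.eventually_lt_const hε).exists
  exact ⟨g n, hn⟩

lemma edist_le_of_dist_le_expect [Fintype ι] [Nonempty ι] [PseudoMetricSpace X] {p q : X}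
    {u v : ι → X} (h : dist p q ≤ 𝔼 i, dist (u i) (v i)) :
    edist p q ≤ (Fintype.card ι : ℝ≥0∞)⁻¹ * ∑ i, edist (u i) (v i) := by
  rw [Fintype.expect_eq_sum_div_card] at h
  have hcard : (0 : ℝ) < Fintype.card ι := by exact_mod_cast Fintype.card_pos
  simp only [edist_dist]
  rw [← ENNReal.ofReal_sum_of_nonneg fun _ _ => dist_nonneg, ← ENNReal.ofReal_natCast,
    ← ENNReal.ofReal_inv_of_pos hcard, ← ENNReal.ofReal_mul (by positivity), ← div_eq_inv_mul]
  exact ENNReal.ofReal_le_ofReal h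

lemma lintegral_edist_le_of_dist_le_expect [Fintype ι] [Nonempty ι] [PseudoMetricSpace X]
    {f g : Ω → X} {u v : ι → Ω → X} {a : ℝ≥0∞}
    (hfg : ∀ ω, dist (f ω) (g ω) ≤ 𝔼 i, dist (u i ω) (v i ω))
    (huv : ∀ i, AEMeasurable (fun ω => edist (u i ω) (v i ω)) P)
    (ha : ∀ i, ∫⁻ ω, edist (u i ω) (v i ω) ∂P = a) : ∫⁻ ω, edist (f ω) (g ω) ∂P ≤ a := by
  calc ∫⁻ ω, edist (f ω) (g ω) ∂P
      ≤ ∫⁻ ω, (Fintype.card ι : ℝ≥0∞)⁻¹ * ∑ i, edist (u i ω) (v i ω) ∂P :=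
        lintegral_mono fun ω => edist_le_of_dist_le_expect (hfg ω)
    _ = (Fintype.card ι : ℝ≥0∞)⁻¹ * (Fintype.card ι * a) := by
        rw [lintegral_const_mul' _ _ (by simp), lintegral_finsetSum' _ fun i _ => huv i]
        simp only [ha, Finset.sum_const, Finset.card_univ, nsmul_eq_mul]
    _ ≤ a := by
        rw [← mul_assoc]
        exact mul_le_of_le_one_left' (ENNReal.inv_mul_le_one _)

end Integral

/-! ### Fluctuations of independent samples -/

section Fluctuation

open ProbabilityTheory

variable {Ω ι : Type*} [MeasurableSpace Ω] {P : Measure Ω} [IsProbabilityMeasure P]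

lemma integral_abs_le_sqrt_variance {h : Ω → ℝ} (hh : MemLp h 2 P) (h₀ : ∫ ω, h ω ∂P = 0) :
    ∫ ω, |h ω| ∂P ≤ √Var[h; P] := by
  have hvar := variance_nonneg |h| P
  rw [variance_eq_sub hh.abs, sub_nonneg] at hvar
  refine Real.le_sqrt_of_sq_le (hvar.trans_eq ?_)
  rw [variance_of_integral_eq_zero hh.aemeasurable h₀]
  simp

lemma integral_abs_sum_pi_le [Fintype ι] {h : Ω → ℝ} (hh : MemLp h 2 P)
    (h₀ : ∫ ω, h ω ∂P = 0) :
    ∫ ω : ι → Ω, |∑ i, h (ω i)| ∂Measure.pi (fun _ => P) ≤ √(Fintype.card ι * Var[h; P]) := by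
  have hcomp (i : ι) : MemLp (fun ω : ι → Ω => h (ω i)) 2 (Measure.pi fun _ => P) :=
    hh.comp_measurePreserving (measurePreserving_eval (fun _ : ι => P) i)
  have hmean : ∫ ω : ι → Ω, ∑ i, h (ω i) ∂Measure.pi (fun _ => P) = 0 := by
    rw [integral_finsetSum _ fun i _ => (hcomp i).integrable one_le_two]
    refine Finset.sum_eq_zero fun i _ => ?_
    rw [integral_comp_eval (μ := fun _ : ι => P) (f := h) hh.aestronglyMeasurable, h₀]
  have hvar := variance_sum_pi (μ := fun _ : ι => P) (X := fun _ => h) fun _ => hh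
  rw [Finset.sum_const, Finset.card_univ, nsmul_eq_mul] at hvar
  rw [← hvar, Finset.sum_fn]
  exact integral_abs_le_sqrt_variance (memLp_finsetSum _ fun i _ => hcomp i) hmean

/-- The difference of the indicators of `s` at the two entries of a pair. Summed over a sample of
pairs, it compares the numbers of first and of second entries in `s`. -/
noncomputable def indicatorDiff {Ω : Type*} (s : Set Ω) (p : Ω × Ω) : ℝ :=
  s.indicator 1 p.1 - s.indicator 1 p.2

lemma indicatorDiff_mem_Icc {Ω : Type*} (s : Set Ω) (p : Ω × Ω) :
    indicatorDiff s p ∈ Set.Icc (-1) 1 := by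
  classical
  simp only [indicatorDiff, Set.indicator_apply]
  split_ifs <;> norm_num

lemma measurable_indicatorDiff {s : Set Ω} (hs : MeasurableSet s) :
    Measurable (indicatorDiff s) :=
  ((measurable_one.indicator hs).comp measurable_fst).sub
    ((measurable_one.indicator hs).comp measurable_snd)

lemma memLp_indicatorDiff {s : Set Ω} (hs : MeasurableSet s) {Q : Measure (Ω × Ω)}
    [IsFiniteMeasure Q] : MemLp (indicatorDiff s) 2 Q :=
  memLp_of_bounded (.of_forall (indicatorDiff_mem_Icc s))
    (measurable_indicatorDiff hs).aestronglyMeasurable 2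

lemma integral_indicatorDiff {s : Set Ω} (hs : MeasurableSet s) :
    ∫ p, indicatorDiff s p ∂P.prod P = 0 := by
  have h_int : Integrable (s.indicator (1 : Ω → ℝ)) P := (integrable_const 1).indicator hs
  simp only [indicatorDiff]
  rw [integral_sub (h_int.comp_fst P) (h_int.comp_snd P), integral_fun_fst, integral_fun_snd,
    sub_self]

lemma integral_abs_sum_indicatorDiff_le [Fintype ι] {s : Set Ω} (hs : MeasurableSet s) :
    ∫ ω : ι → Ω × Ω, |∑ i, indicatorDiff s (ω i)| ∂Measure.pi (fun _ => P.prod P) ≤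
      √(Fintype.card ι) := by
  have hvar : Var[indicatorDiff s; P.prod P] ≤ 1 := by
    refine (variance_le_sq_of_bounded (.of_forall (indicatorDiff_mem_Icc s))
      (measurable_indicatorDiff hs).aemeasurable).trans_eq ?_
    norm_num
  refine (integral_abs_sum_pi_le (memLp_indicatorDiff hs) (integral_indicatorDiff hs)).trans ?_
  exact Real.sqrt_le_sqrt (mul_le_of_le_one_right (Nat.cast_nonneg _) hvar)

end Fluctuation

section Concentration

variable {X ι : Type*} [Fintype ι]

lemma exists_perm_forall_ne {ι : Type*} [Finite ι] (x y : ι → X) : ∃ e : Equiv.Perm ι,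
    ∀ i j, x (e i) ≠ y i → x (e j) ≠ y j → x (e i) ≠ y j := by
  classical
  cases nonempty_fintype ι
  obtain ⟨e, he⟩ := Finite.exists_min fun e : Equiv.Perm ι => #{i | x (e i) ≠ y i}
  -- If `x (e i) = y j`, composing `e` with the swap of `i` and `j` removes a mismatch.
  refine ⟨e, fun i j hi hj hij => (he (e * Equiv.swap i j)).not_gt (Finset.card_lt_card ?_)⟩
  simp only [Finset.ssubset_def, Finset.subset_iff, Finset.mem_filter_univ, not_forall]
  refine ⟨fun k hk => ?_, j, hj, by simpa using hij⟩
  obtain rfl | hki := eq_or_ne k i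
  · exact hi
  obtain rfl | hkj := eq_or_ne k j
  · exact hj
  · rwa [Equiv.Perm.mul_apply, Equiv.swap_apply_of_ne_of_ne hki hkj] at hk

lemma sum_indicatorDiff_singleton [DecidableEq X] (x y : ι → X) (v : X) :
    ∑ i, indicatorDiff {v} (x i, y i) = #{i | x i = v} - #{i | y i = v} := by
  simp only [indicatorDiff, Set.indicator_apply, Set.mem_singleton_iff, Pi.one_apply,
    Finset.sum_sub_distrib, Finset.natCast_card_filter]

lemma card_ne_le_sum_abs [DecidableEq X] {x y : ι → X} {S : Finset X} (hy : ∀ i, y i ∈ S)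
    (hxy : ∀ i j, x i ≠ y i → x j ≠ y j → x i ≠ y j) :
    (#{i | x i ≠ y i} : ℝ) ≤ ∑ v ∈ S, |∑ i, indicatorDiff {v} (x i, y i)| := by
  classical
  rw [Finset.card_eq_sum_card_fiberwise (f := y) (t := S) fun i _ => hy i, Nat.cast_sum]
  refine Finset.sum_le_sum fun v _ => ?_
  obtain h | ⟨i, hi⟩ := Finset.eq_empty_or_nonempty {k ∈ ({i | x i ≠ y i} : Finset ι) | y k = v}
  · simp [h]
  obtain ⟨hne, rfl⟩ : x i ≠ y i ∧ y i = v := by simpa using hi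
  have hsub : ({k | x k = y i} : Finset ι) ⊆ ({k | y k = y i} : Finset ι) := by
    intro k
    simp only [Finset.mem_filter_univ]
    exact fun hk => by_contra fun hyk => hxy k i (fun h => hyk (h ▸ hk)) hne hk
  have hfiber : ({k ∈ ({i | x i ≠ y i} : Finset ι) | y k = y i}) =
      ({k | y k = y i} : Finset ι) \ ({k | x k = y i} : Finset ι) := by
    ext k
    simp only [Finset.mem_sdiff, Finset.mem_filter]
    grind
  rw [hfiber, Finset.cast_card_sdiff hsub, sum_indicatorDiff_singleton, abs_sub_comm]
  exact le_abs_self _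

namespace IsSymmetricMean

variable {Ω : Type*} [MetricSpace X] [MeasurableSpace Ω] {M : X → X → X} {b : (ι → X) → X}
  {P : Measure Ω} [IsProbabilityMeasure P]

lemma dist_le_sum_indicatorDiff (hb : IsSymmetricMean M b) {S : Finset X} {x y : ι → X}
    (hx : ∀ i, x i ∈ S) (hy : ∀ i, y i ∈ S) :
    dist (b x) (b y) ≤ Metric.diam (S : Set X) / Fintype.card ι *
      ∑ v ∈ S, |∑ i, indicatorDiff {v} (x i, y i)| := by
  classical
  obtain ⟨e, he⟩ := exists_perm_forall_ne x y
  have hdist (i : ι) :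
      dist (x (e i)) (y i) ≤ if x (e i) ≠ y i then Metric.diam (S : Set X) else 0 := by
    split_ifs with h
    · exact Metric.dist_le_diam_of_mem S.finite_toSet.isBounded (hx _) (hy i)
    · rw [not_not.1 h, dist_self]
  have hperm (v : X) : ∑ i, indicatorDiff {v} (x (e i), y i) =
      ∑ i, indicatorDiff {v} (x i, y i) := by
    simp only [indicatorDiff, Finset.sum_sub_distrib]
    rw [Equiv.sum_comp e fun i => ({v} : Set X).indicator (1 : X → ℝ) (x i)]
  calc dist (b x) (b y) = dist (b (x ∘ e)) (b y) := by rw [hb.comp_perm]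
    _ ≤ (∑ i, dist (x (e i)) (y i)) / Fintype.card ι := by
        rw [← Fintype.expect_eq_sum_div_card]
        exact hb.dist_le (x ∘ e) y
    _ ≤ (#{i | x (e i) ≠ y i} * Metric.diam (S : Set X)) / Fintype.card ι := by
        gcongr
        refine (Finset.sum_le_sum fun i _ => hdist i).trans_eq ?_
        rw [← Finset.sum_filter, Finset.sum_const, nsmul_eq_mul]
    _ = Metric.diam (S : Set X) / Fintype.card ι * #{i | x (e i) ≠ y i} := by ring
    _ ≤ Metric.diam (S : Set X) / Fintype.card ι *
          ∑ v ∈ S, |∑ i, indicatorDiff {v} (x i, y i)| := by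
        simp only [← hperm]
        gcongr
        exact card_ne_le_sum_abs hy he

lemma lintegral_edist_simpleFunc_le (hb : IsSymmetricMean M b) (g : SimpleFunc Ω X) :
    ∫⁻ ω : ι → Ω × Ω, edist (b fun i => g (ω i).1) (b fun i => g (ω i).2)
        ∂Measure.pi (fun _ => P.prod P) ≤
      ENNReal.ofReal (Metric.diam (g.range : Set X) * #g.range / √(Fintype.card ι)) := by
  have h_int (s : Set Ω) (hs : MeasurableSet s) : Integrable
      (fun ω : ι → Ω × Ω => |∑ i, indicatorDiff s (ω i)|) (Measure.pi fun _ => P.prod P) :=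
    (integrable_finsetSum _ fun i _ =>
      integrable_comp_eval ((memLp_indicatorDiff hs).integrable one_le_two)).abs
  have hfiber (v : X) := g.measurableSet_fiber v
  calc ∫⁻ ω : ι → Ω × Ω, edist (b fun i => g (ω i).1) (b fun i => g (ω i).2)
        ∂Measure.pi (fun _ => P.prod P)
      ≤ ∫⁻ ω : ι → Ω × Ω, ENNReal.ofReal (Metric.diam (g.range : Set X) / Fintype.card ι *
          ∑ v ∈ g.range, |∑ i, indicatorDiff (g ⁻¹' {v}) (ω i)|)
          ∂Measure.pi (fun _ => P.prod P) := by
        refine lintegral_mono fun ω => ?_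
        rw [edist_dist]
        exact ENNReal.ofReal_le_ofReal (hb.dist_le_sum_indicatorDiff
          (fun i => g.mem_range_self _) fun i => g.mem_range_self _)
    _ = ENNReal.ofReal (Metric.diam (g.range : Set X) / Fintype.card ι *
          ∑ v ∈ g.range, ∫ ω : ι → Ω × Ω, |∑ i, indicatorDiff (g ⁻¹' {v}) (ω i)|
            ∂Measure.pi (fun _ => P.prod P)) := by
        rw [← integral_finsetSum _ fun v _ => h_int _ (hfiber v), ← integral_const_mul,
          ofReal_integral_eq_lintegral_ofReal]
        · exact (integrable_finsetSum _ fun v _ => h_int _ (hfiber v)).const_mul _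
        · exact .of_forall fun ω => by positivity
    _ ≤ ENNReal.ofReal (Metric.diam (g.range : Set X) / Fintype.card ι *
          (#g.range * √(Fintype.card ι))) := by
        gcongr
        refine (Finset.sum_le_sum fun v _ =>
          integral_abs_sum_indicatorDiff_le (hfiber v)).trans_eq ?_
        rw [Finset.sum_const, nsmul_eq_mul]
    _ = ENNReal.ofReal (Metric.diam (g.range : Set X) * #g.range / √(Fintype.card ι)) := by
        rw [div_mul_eq_mul_div, ← mul_assoc, mul_div_assoc, Real.sqrt_div_self, div_eq_mul_inv]

variable [Nonempty ι]

lemma continuous (hb : IsSymmetricMean M b) : Continuous b := by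
  refine (LipschitzWith.of_dist_le' (K := 1) fun x y => ?_).continuous
  rw [one_mul]
  exact (hb.dist_le x y).trans
    (Finset.expect_le Finset.univ_nonempty fun i _ => dist_le_pi_dist x y i)

lemma aestronglyMeasurable (hb : IsSymmetricMean M b) {f : Ω → X}
    (hf : AEStronglyMeasurable f P) :
    AEStronglyMeasurable (fun ω : ι → Ω => b fun i => f (ω i)) (Measure.pi fun _ => P) :=
  hb.continuous.comp_aestronglyMeasurable (aestronglyMeasurable_pi fun i =>
    hf.comp_measurePreserving (measurePreserving_eval (fun _ : ι => P) i))

lemma lintegral_edist_le (hb : IsSymmetricMean M b) {f g : Ω → X}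
    (hf : AEStronglyMeasurable f P) (hg : AEStronglyMeasurable g P) :
    ∫⁻ ω : ι → Ω, edist (b fun i => f (ω i)) (b fun i => g (ω i)) ∂Measure.pi (fun _ => P) ≤
      ∫⁻ ω, edist (f ω) (g ω) ∂P := by
  have heval (i : ι) := measurePreserving_eval (fun _ : ι => P) i
  exact lintegral_edist_le_of_dist_le_expect
    (fun ω => hb.dist_le (fun i => f (ω i)) fun i => g (ω i))
    (fun i => (hf.edist hg).comp_quasiMeasurePreserving (heval i).quasiMeasurePreserving)
    fun i => lintegral_comp_of_measurePreserving (heval i) (hf.edist hg)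

lemma lintegral_edist_pair_le (hb : IsSymmetricMean M b) {f : Ω → X}
    (hf : AEStronglyMeasurable f P) (g : SimpleFunc Ω X) :
    ∫⁻ ω : ι → Ω × Ω, edist (b fun i => f (ω i).1) (b fun i => f (ω i).2)
        ∂Measure.pi (fun _ => P.prod P) ≤ 2 * ∫⁻ ω, edist (f ω) (g ω) ∂P +
      ENNReal.ofReal (Metric.diam (g.range : Set X) * #g.range / √(Fintype.card ι)) := by
  have hfg := hf.edist g.aestronglyMeasurable
  let F (φ : Ω × Ω → Ω) (ω : ι → Ω × Ω) : X := b fun i => f (φ (ω i))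
  let G (φ : Ω × Ω → Ω) (ω : ι → Ω × Ω) : X := b fun i => g (φ (ω i))
  let E (u v : (ι → Ω × Ω) → X) : ℝ≥0∞ :=
    ∫⁻ ω, edist (u ω) (v ω) ∂Measure.pi fun _ => P.prod P
  have hproj {φ : Ω × Ω → Ω} (hφ : MeasurePreserving φ (P.prod P) P) :
      E (F φ) (G φ) ≤ ∫⁻ ω, edist (f ω) (g ω) ∂P :=
    (hb.lintegral_edist_le (hf.comp_measurePreserving hφ)
      (g.aestronglyMeasurable.comp_measurePreserving hφ)).trans_eq
        (lintegral_comp_of_measurePreserving hφ hfg)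
  have hF := hb.aestronglyMeasurable (hf.comp_measurePreserving (measurePreserving_fst (ν := P)))
  have hG {φ : Ω × Ω → Ω} (hφ : MeasurePreserving φ (P.prod P) P) :
      AEStronglyMeasurable (G φ) (Measure.pi fun _ => P.prod P) :=
    hb.aestronglyMeasurable (g.aestronglyMeasurable.comp_measurePreserving hφ)
  have hcomm : E (G Prod.snd) (F Prod.snd) = E (F Prod.snd) (G Prod.snd) := by
    simp only [E, edist_comm]
  calc E (F Prod.fst) (F Prod.snd)
      ≤ E (F Prod.fst) (G Prod.fst) + E (G Prod.fst) (F Prod.snd) :=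
        lintegral_edist_le_add _ (hF.edist (hG measurePreserving_fst))
    _ ≤ E (F Prod.fst) (G Prod.fst) +
          (E (G Prod.fst) (G Prod.snd) + E (F Prod.snd) (G Prod.snd)) := by
        rw [← hcomm]
        gcongr
        exact lintegral_edist_le_add _ ((hG measurePreserving_fst).edist (hG measurePreserving_snd))
    _ ≤ ∫⁻ ω, edist (f ω) (g ω) ∂P +
          (ENNReal.ofReal (Metric.diam (g.range : Set X) * #g.range / √(Fintype.card ι)) +
            ∫⁻ ω, edist (f ω) (g ω) ∂P) :=
        add_le_add (hproj measurePreserving_fst)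
          (add_le_add (hb.lintegral_edist_simpleFunc_le g) (hproj measurePreserving_snd))
    _ = _ := by rw [two_mul, add_comm (ENNReal.ofReal _), add_assoc]

lemma edist_le_lintegral_coupling_add [MeasurableSpace X] (hb : IsSymmetricMean M b)
    {μ ν : Measure X} [IsProbabilityMeasure μ] [IsProbabilityMeasure ν]
    (hμ : AEStronglyMeasurable id μ) (hν : AEStronglyMeasurable id ν) {γ : Measure (X × X)}
    [IsProbabilityMeasure γ] (hγμ : MeasurePreserving Prod.fst γ μ)
    (hγν : MeasurePreserving Prod.snd γ ν) (z w : X) :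
    edist z w ≤ ∫⁻ x, edist (b x) z ∂Measure.pi (fun _ => μ) +
      (∫⁻ p, edist p.1 p.2 ∂γ + ∫⁻ x, edist (b x) w ∂Measure.pi (fun _ => ν)) := by
  have hfst : AEStronglyMeasurable Prod.fst γ := hμ.comp_measurePreserving hγμ
  have hsnd : AEStronglyMeasurable Prod.snd γ := hν.comp_measurePreserving hγν
  have hpi {ρ : Measure X} [IsProbabilityMeasure ρ] (hρ : AEStronglyMeasurable id ρ)
      {φ : X × X → X} (hφ : MeasurePreserving φ γ ρ) (u : X) :
      ∫⁻ x : ι → X × X, edist (b fun i => φ (x i)) u ∂Measure.pi (fun _ => γ) =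
        ∫⁻ x, edist (b x) u ∂Measure.pi (fun _ => ρ) :=
    lintegral_comp_of_measurePreserving (measurePreserving_pi _ _ fun _ => hφ)
      ((hb.aestronglyMeasurable hρ).edist aestronglyMeasurable_const)
  calc edist z w
      ≤ ∫⁻ x : ι → X × X, edist (b fun i => (x i).1) z ∂Measure.pi (fun _ => γ) +
        ∫⁻ x : ι → X × X, edist (b fun i => (x i).1) w ∂Measure.pi (fun _ => γ) :=
        edist_le_lintegral_add (hb.aestronglyMeasurable hfst) z w
    _ ≤ ∫⁻ x, edist (b x) z ∂Measure.pi (fun _ => μ) +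
          (∫⁻ p, edist p.1 p.2 ∂γ + ∫⁻ x, edist (b x) w ∂Measure.pi (fun _ => ν)) := by
        rw [hpi hμ hγμ, ← hpi hν hγν]
        gcongr
        refine (lintegral_edist_le_add _
          ((hb.aestronglyMeasurable hfst).edist (hb.aestronglyMeasurable hsnd))).trans ?_
        gcongr
        exact hb.lintegral_edist_le hfst hsnd

end IsSymmetricMean

end Concentration

/-! ### Barycenters -/

section Barycenter

variable {X : Type*} [MetricSpace X] {M : X → X → X} {b : ∀ n, (Fin (n + 2) → X) → X}

lemma IsSymmetricMeanSeq.tendsto_lintegral_edist_pair {Ω : Type*} [MeasurableSpace Ω]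
    {P : Measure Ω} [IsProbabilityMeasure P] (hb : IsSymmetricMeanSeq M b) {f : Ω → X}
    (hf : AEStronglyMeasurable f P) {x₀ : X} (hx₀ : ∫⁻ ω, edist (f ω) x₀ ∂P ≠ ∞) :
    Tendsto (fun n => ∫⁻ ω : Fin (n + 2) → Ω × Ω,
      edist (b n fun i => f (ω i).1) (b n fun i => f (ω i).2) ∂Measure.pi (fun _ => P.prod P))
      atTop (𝓝 0) := by
  refine ENNReal.tendsto_nhds_zero.2 fun ε hε => ?_
  obtain ⟨g, hg⟩ := exists_simpleFunc_lintegral_edist_lt hf hx₀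
    (ENNReal.half_pos (ENNReal.half_pos hε.ne').ne')
  have hsqrt : Tendsto (fun n : ℕ => ENNReal.ofReal
      (Metric.diam (g.range : Set X) * #g.range / √(n + 2 : ℕ))) atTop (𝓝 0) := by
    rw [← ENNReal.ofReal_zero]
    exact ENNReal.tendsto_ofReal (tendsto_const_nhds.div_atTop (Real.tendsto_sqrt_atTop.comp
      (tendsto_natCast_atTop_atTop.comp (tendsto_add_atTop_nat 2))))
  filter_upwards [ENNReal.tendsto_nhds_zero.1 hsqrt (ε / 2) (ENNReal.half_pos hε.ne')] with n hn
  refine ((hb.isSymmetricMean n).lintegral_edist_pair_le hf g).trans ?_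
  rw [Fintype.card_fin]
  grw [hg, hn]
  rw [ENNReal.mul_div_cancel two_ne_zero ENNReal.ofNat_ne_top, ENNReal.add_halves]

variable [MeasurableSpace X]

/-- The point `z` is a barycenter of `μ`: the means of `n` independent points with law `μ` tend to
`z` in `L¹` as `n → ∞`. -/
def IsBarycenter {X : Type*} [MetricSpace X] [MeasurableSpace X]
    (b : ∀ n, (Fin (n + 2) → X) → X) (μ : Measure X) (z : X) : Prop :=
  Tendsto (fun n => ∫⁻ x, edist (b n x) z ∂Measure.pi fun _ => μ) atTop (𝓝 0)

variable {μ ν : Measure X} [IsProbabilityMeasure μ] [IsProbabilityMeasure ν]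

namespace IsSymmetricMeanSeq

lemma aestronglyMeasurable (hb : IsSymmetricMeanSeq M b) (hμ : AEStronglyMeasurable id μ) (n : ℕ) :
    AEStronglyMeasurable (b n) (Measure.pi fun _ => μ) :=
  (hb.isSymmetricMean n).aestronglyMeasurable hμ

lemma antitone_lintegral_edist (hb : IsSymmetricMeanSeq M b) (hμ : AEStronglyMeasurable id μ)
    (z : X) : Antitone fun n => ∫⁻ x, edist (b n x) z ∂Measure.pi fun _ => μ := by
  refine antitone_nat_of_succ_le fun n => ?_
  have hmeas : AEMeasurable (fun x => edist (b n x) z) (Measure.pi fun _ => μ) :=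
    (hb.aestronglyMeasurable hμ n).edist aestronglyMeasurable_const
  have hpres (i : Fin (n + 3)) : MeasurePreserving (fun x : Fin (n + 3) → X => x ∘ i.succAbove)
      (Measure.pi fun _ => μ) (Measure.pi fun _ => μ) :=
    measurePreserving_snd.comp (measurePreserving_piFinSuccAbove (fun _ => μ) i)
  exact lintegral_edist_le_of_dist_le_expect (fun x => hb.dist_succ_le n x z)
    (fun i => hmeas.comp_quasiMeasurePreserving (hpres i).quasiMeasurePreserving)
    fun i => lintegral_comp_of_measurePreserving (hpres i) hmeas

lemma exists_lintegral_edist_le_pair (hb : IsSymmetricMeanSeq M b) (hμ : AEStronglyMeasurable id μ)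
    (n : ℕ) : ∃ z, ∫⁻ x, edist (b n x) z ∂Measure.pi (fun _ => μ) ≤
      ∫⁻ x : Fin (n + 2) → X × X, edist (b n fun i => (x i).1) (b n fun i => (x i).2)
        ∂Measure.pi (fun _ => μ.prod μ) := by
  have hm := hb.aestronglyMeasurable hμ n
  obtain ⟨z, hz⟩ := exists_lintegral_edist_le_prod hm
  refine ⟨z, hz.trans_eq ?_⟩
  exact (lintegral_comp_of_measurePreserving
    (measurePreserving_arrowProdEquivProdArrow X X (Fin (n + 2)) (fun _ => μ) fun _ => μ)
    ((hm.comp_measurePreserving measurePreserving_fst).edist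
      (hm.comp_measurePreserving measurePreserving_snd))).symm

lemma exists_isBarycenter [CompleteSpace X] (hb : IsSymmetricMeanSeq M b)
    (hμ : AEStronglyMeasurable id μ) {x₀ : X} (hx₀ : ∫⁻ x, edist x x₀ ∂μ ≠ ∞) :
    ∃ z, IsBarycenter b μ z := by
  choose z hz using hb.exists_lintegral_edist_le_pair hμ
  have hlim := tendsto_of_tendsto_of_tendsto_of_le_of_le tendsto_const_nhds
    (hb.tendsto_lintegral_edist_pair hμ hx₀) (fun _ => zero_le) hz
  have hcauchy : CauchySeq z := by
    refine EMetric.cauchySeq_iff.2 fun ε hε => ?_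
    obtain ⟨N, hN⟩ := eventually_atTop.1 (hlim.eventually_lt_const (ENNReal.half_pos hε.ne'))
    refine ⟨N, fun m hm n hn => ?_⟩
    calc edist (z m) (z n)
        ≤ ∫⁻ x, edist (b (max m n) x) (z m) ∂Measure.pi (fun _ => μ) +
            ∫⁻ x, edist (b (max m n) x) (z n) ∂Measure.pi (fun _ => μ) :=
          edist_le_lintegral_add (hb.aestronglyMeasurable hμ _) _ _
      _ ≤ ∫⁻ x, edist (b m x) (z m) ∂Measure.pi (fun _ => μ) +
            ∫⁻ x, edist (b n x) (z n) ∂Measure.pi (fun _ => μ) :=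
          add_le_add (hb.antitone_lintegral_edist hμ _ (le_max_left m n))
            (hb.antitone_lintegral_edist hμ _ (le_max_right m n))
      _ < ε / 2 + ε / 2 := ENNReal.add_lt_add (hN m hm) (hN n hn)
      _ = ε := ENNReal.add_halves ε
  obtain ⟨l, hl⟩ := cauchySeq_tendsto_of_complete hcauchy
  have hsum := hlim.add (tendsto_iff_edist_tendsto_0.1 hl)
  rw [add_zero] at hsum
  refine ⟨l, tendsto_of_tendsto_of_tendsto_of_le_of_le tendsto_const_nhds hsum
    (fun _ => zero_le) fun n => ?_⟩
  refine (lintegral_edist_le_add (g := fun _ => z n) (fun _ => l)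
    ((hb.aestronglyMeasurable hμ n).edist aestronglyMeasurable_const)).trans_eq ?_
  rw [lintegral_const, measure_univ, mul_one]

end IsSymmetricMeanSeq

namespace IsBarycenter

variable {z w : X}

lemma edist_le_lintegral_coupling (hb : IsSymmetricMeanSeq M b) (hz : IsBarycenter b μ z)
    (hw : IsBarycenter b ν w) (hμ : AEStronglyMeasurable id μ) (hν : AEStronglyMeasurable id ν)
    {γ : Measure (X × X)} [IsProbabilityMeasure γ] (hγμ : MeasurePreserving Prod.fst γ μ)
    (hγν : MeasurePreserving Prod.snd γ ν) : edist z w ≤ ∫⁻ p, edist p.1 p.2 ∂γ := by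
  have hlim := hz.add (hw.const_add (∫⁻ p, edist p.1 p.2 ∂γ))
  rw [add_zero, zero_add] at hlim
  exact ge_of_tendsto' hlim fun n =>
    (hb.isSymmetricMean n).edist_le_lintegral_coupling_add hμ hν hγμ hγν z w

lemma mem (hb : IsSymmetricMeanSeq M b) (hz : IsBarycenter b μ z) {C : Set X} (hC : IsClosed C)
    (hMC : IsMidpointConvex M C) (hμC : ∀ᵐ x ∂μ, x ∈ C) : z ∈ C := by
  refine (Metric.mem_iff_infEDist_zero_of_closed hC).2 (le_antisymm ?_ bot_le)
  refine ge_of_tendsto' hz fun n => ?_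
  have hmem : ∀ᵐ x ∂Measure.pi (fun _ : Fin (n + 2) => μ), ∀ i, x i ∈ C :=
    eventually_all.2 fun i => Measure.tendsto_eval_ae_ae.eventually hμC
  calc Metric.infEDist z C = ∫⁻ _x, Metric.infEDist z C ∂Measure.pi fun _ : Fin (n + 2) => μ := by
        rw [lintegral_const, measure_univ, mul_one]
    _ ≤ ∫⁻ x, edist (b n x) z ∂Measure.pi fun _ => μ := by
        refine lintegral_mono_ae ?_
        filter_upwards [hmem] with x hx
        rw [edist_comm]
        exact Metric.infEDist_le_edist_of_mem ((hb.isSymmetricMean n).mem C hC hMC x hx)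

end IsBarycenter

end Barycenter

/-! ### The contracting barycenter map -/

section Bicombing

variable {X : Type*} [MetricSpace X] {σ : X → X → ℝ → X}

lemma IsGeodesicBicombing.apply_self (hgeo : IsGeodesicBicombing σ) (x : X) {t : ℝ}
    (ht : t ∈ Set.Icc (0 : ℝ) 1) : σ x x t = x := by
  have h := hgeo.2.2 x x t ht 0 (by simp)
  rwa [dist_self, mul_zero, hgeo.1, dist_eq_zero] at h

lemma IsConical.isConicalMidpoint (hcon : IsConical σ) (hgeo : IsGeodesicBicombing σ) :
    IsConicalMidpoint fun x y => σ x y (1 / 2) where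
  self x := hgeo.apply_self x (by norm_num)
  dist_le x y x' y' := by
    linarith [hcon x y x' y' (1 / 2) (by norm_num)]

lemma IsConicalMidpoint.isMidpointConvex_closure {M : X → X → X} (hM : IsConicalMidpoint M)
    {C : Set X} (hC : IsMidpointConvex M C) : IsMidpointConvex M (closure C) :=
  fun _ hx _ hy => map_mem_closure₂ hM.continuous hx hy hC

lemma subset_sigmaConvexHull (σ : X → X → ℝ → X) (A : Set X) : A ⊆ sigmaConvexHull σ A :=
  Set.subset_sInter fun _ hC => hC.1

lemma isSigmaConvex_sigmaConvexHull (σ : X → X → ℝ → X) (A : Set X) :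
    IsSigmaConvex σ (sigmaConvexHull σ A) :=
  fun x hx y hy t ht C hC => hC.2 x (hx C hC) y (hy C hC) t ht

lemma IsSigmaConvex.isMidpointConvex {C : Set X} (hC : IsSigmaConvex σ C) :
    IsMidpointConvex (fun x y => σ x y (1 / 2)) C :=
  fun x hx y hy => hC x hx y hy (1 / 2) (by norm_num)

end Bicombing

lemma measureSupport_eq_support {X : Type*} [TopologicalSpace X] [MeasurableSpace X]
    (μ : Measure X) : measureSupport μ = μ.support := by
  rw [Measure.support_eq_forall_isOpen]
  exact Set.ext fun x => forall_congr' fun U => forall_comm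

theorem exists_contracting_barycenter_in_convex_hull_of_support_general {X : Type*} [MetricSpace X]
    [CompleteSpace X] [MeasurableSpace X] [BorelSpace X] {M : X → X → X}
    (hM : IsConicalMidpoint M) : ∃ β : P1 X → X, IsContractingBarycenter β ∧
      ∀ (μ : P1 X) (C : Set X), IsClosed C → IsMidpointConvex M C → measureSupport μ.1 ⊆ C →
        β μ ∈ C := by
  obtain ⟨b, hb⟩ := hM.exists_isSymmetricMeanSeq
  have hprob (μ : P1 X) : IsProbabilityMeasure μ.1 := μ.2.1
  have hid (μ : P1 X) : AEStronglyMeasurable id μ.1 :=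
    have := μ.2.2.1
    aestronglyMeasurable_id_of_innerRegular μ.1
  have hex (μ : P1 X) : ∃ z, IsBarycenter b μ.1 z := by
    obtain ⟨x₀⟩ := μ.1.nonempty_of_neZero
    exact hb.exists_isBarycenter (hid μ) (μ.2.2.2 x₀)
  choose β hβ using hex
  refine ⟨β, ⟨fun μ ν => le_iInf₂ fun γ ⟨_, hγμ, hγν⟩ => ?_, fun x μ hμ => ?_⟩,
    fun μ C hC hMC hsupp => (hβ μ).mem hb hC hMC ?_⟩
  · exact (hβ μ).edist_le_lintegral_coupling hb (hβ ν) (hid μ) (hid ν)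
      ⟨measurable_fst, hγμ⟩ ⟨measurable_snd, hγν⟩
  · refine (hβ μ).mem hb isClosed_singleton (hM.isMidpointConvex_singleton x) ?_
    rw [hμ]
    exact (ae_dirac_iff (measurableSet_singleton x)).2 rfl
  · have := μ.2.2.1
    rw [measureSupport_eq_support] at hsupp
    exact mem_of_superset Measure.support_mem_ae_of_innerRegular hsupp

/-- **Theorem 2.7.** Every complete metric space with a conical geodesic bicombing `σ` admits
a contracting barycenter map `β_σ` such that `β_σ μ` lies in the closed `σ`-convex hull of
the support of `μ` for every `μ ∈ P₁(X)`. -/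
theorem exists_contracting_barycenter_in_convex_hull_of_support
    {X : Type*} [MetricSpace X] [CompleteSpace X] [MeasurableSpace X] [BorelSpace X]
    (σ : X → X → ℝ → X) (hgeo : IsGeodesicBicombing σ) (hcon : IsConical σ) :
    ∃ β : P1 X → X, IsContractingBarycenter β ∧
      ∀ μ : P1 X, β μ ∈ closure (sigmaConvexHull σ (measureSupport μ.1)) := by
  obtain ⟨β, hβ, hmem⟩ := exists_contracting_barycenter_in_convex_hull_of_support_general
    (hcon.isConicalMidpoint hgeo)
  exact ⟨β, hβ, fun μ => hmem μ _ isClosed_closure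
    ((hcon.isConicalMidpoint hgeo).isMidpointConvex_closure
      (isSigmaConvex_sigmaConvexHull σ _).isMidpointConvex)
    ((subset_sigmaConvexHull σ _).trans subset_closure)⟩
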